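/- Let n ≥ 4. The maximum size of a simple (n-3)-cycle on [n] over F_2 equals ⌊n²/4⌋. -/

import Mathlib

open Finset symmDiff

/-- The vertex set `[n] = {1, …, n}`. -/
def rng (n : ℕ) : Finset ℕ := Finset.Icc 1 n

/-- The set of `d`-simplices (i.e. `(d+1)`-element subsets) on the vertex set `V`. -/
def simplices (V : Finset ℕ) (d : ℕ) : Finset (Finset ℕ) :=
  V.powerset.filter fun σ => σ.card = d + 1

/-- The mod-2 boundary of a set `X` of simplices: the set of faces `τ` of codimension one
(`|τ| + 1 = |σ|`) contained in an odd number of members of `X`. -/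
def bd (X : Finset (Finset ℕ)) : Finset (Finset ℕ) :=
  (X.biUnion fun σ => σ.powerset).filter
    fun τ => Odd (X.filter fun σ => τ ⊆ σ ∧ τ.card + 1 = σ.card).card

/-- A set of simplices is acyclic (a forest) over `F_2` if no nonempty subset has
empty boundary. -/
def IsAcyclic (F : Finset (Finset ℕ)) : Prop :=
  ∀ Y ⊆ F, Y ≠ ∅ → bd Y ≠ ∅

/-- A `d`-hypertree on `V`: a maximal acyclic set of `d`-simplices on `V`. -/
def IsHypertreeOn (V : Finset ℕ) (d : ℕ) (T : Finset (Finset ℕ)) : Prop :=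
  T ⊆ simplices V d ∧ IsAcyclic T ∧
    ∀ G, T ⊆ G → G ⊆ simplices V d → IsAcyclic G → G = T

/-- A simple cycle over `F_2`: a nonempty set with empty boundary, no nonempty proper
subset of which has empty boundary. -/
def IsSimpleCycle (Z : Finset (Finset ℕ)) : Prop :=
  Z ≠ ∅ ∧ bd Z = ∅ ∧ ∀ Y ⊂ Z, Y ≠ ∅ → bd Y ≠ ∅

/-- Collapsibility: `X` can be reduced to `∅` by repeatedly removing a simplex `σ ∈ X`
containing a codimension-one face contained in no other current member of `X`. -/
inductive Collapsible : Finset (Finset ℕ) → Prop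
  | empty : Collapsible ∅
  | step (X : Finset (Finset ℕ)) (σ τ : Finset ℕ) (hσ : σ ∈ X) (hτ : τ ⊆ σ)
      (hcard : τ.card + 1 = σ.card) (huniq : ∀ σ' ∈ X, τ ⊆ σ' → σ' = σ)
      (h : Collapsible (X.erase σ)) : Collapsible X

/-- The cone over `X` with apex `v`. -/
def cone (v : ℕ) (X : Finset (Finset ℕ)) : Finset (Finset ℕ) :=
  X.image (insert v)

/-- The link of the vertex `v` in `X`. -/
def link (v : ℕ) (X : Finset (Finset ℕ)) : Finset (Finset ℕ) :=
  (X.filter fun σ => v ∈ σ).image fun σ => σ.erase v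

/-- `fill Z T`: the subset `F ⊆ T` with `∂F = Z` (when it exists; it is unique when `T`
is a hypertree and `Z` a cycle). -/
noncomputable def fill (Z T : Finset (Finset ℕ)) : Finset (Finset ℕ) :=
  if h : ∃ F, F ⊆ T ∧ bd F = Z then h.choose else ∅

/-- The average filling-volume `μ(T)` of a `d`-hypertree `T` on `[n]`. -/
noncomputable def fillVolAvg (n d : ℕ) (T : Finset (Finset ℕ)) : ℝ :=
  (∑ σ ∈ simplices (rng n) d, ((fill (bd {σ}) T).card : ℝ)) / (n.choose (d + 1) : ℝ)

open Classical in
/-- The cut of `τ` in `T`: the set of `d`-simplices `σ` on `[n]` such that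
`T ⊕ {τ} ⊕ {σ}` is a `d`-hypertree on `[n]`. -/
noncomputable def cut (n d : ℕ) (τ : Finset ℕ) (T : Finset (Finset ℕ)) : Finset (Finset ℕ) :=
  (simplices (rng n) d).filter fun σ => IsHypertreeOn (rng n) d ((T ∆ {τ}) ∆ {σ})

/-!
Replacing each `(n-3)`-simplex by its complement, a pair of vertices, turns a set of simplices into
a graph on `[n]` and the boundary operator into the simplicial coboundary. Hence `∂Z = ∅` says that
every triangle contains an even number of edges of the graph, i.e. that the graph is a 1-cocycle of
the full simplex on `[n]`. Such a cocycle is the coboundary of a vertex set `S`, that is, the cut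
between `S` and its complement. A nonempty cut is not properly contained in another cut, so the
simple cycles are exactly the nonempty cuts, and the sizes to be maximized are `|S| (n - |S|)`.
-/

section Duality

variable {V : Finset ℕ} {Z : Finset (Finset ℕ)} {d k : ℕ}

theorem mem_simplices {σ : Finset ℕ} : σ ∈ simplices V d ↔ σ ⊆ V ∧ #σ = d + 1 := by
  simp [simplices]

theorem mem_bd {τ : Finset ℕ} : τ ∈ bd Z ↔ Odd #{σ ∈ Z | τ ⊆ σ ∧ #τ + 1 = #σ} := by
  simp only [bd, mem_filter, mem_biUnion, mem_powerset, and_iff_right_iff_imp]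
  intro hodd
  obtain ⟨σ, hσ⟩ := card_pos.1 hodd.pos
  rw [mem_filter] at hσ
  exact ⟨σ, hσ.1, hσ.2.1⟩

theorem subset_and_card_eq_of_mem_bd (hZ : Z ⊆ simplices V d) {τ : Finset ℕ} (hτ : τ ∈ bd Z) :
    τ ⊆ V ∧ #τ = d := by
  obtain ⟨σ, hσ⟩ := card_pos.1 (mem_bd.1 hτ).pos
  obtain ⟨hσZ, hτσ, hcard⟩ := mem_filter.1 hσ
  obtain ⟨hσV, hσd⟩ := mem_simplices.1 (hZ hσZ)
  exact ⟨hτσ.trans hσV, by omega⟩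

theorem sdiff_mem_simplices_iff (hV : #V = d + 1 + k) {e : Finset ℕ} (he : e ⊆ V) :
    V \ e ∈ simplices V d ↔ #e = k := by
  have := card_le_card he
  rw [mem_simplices, card_sdiff_of_subset he, and_iff_right sdiff_subset]
  omega

theorem exists_mem_powersetCard_sdiff_eq (hV : #V = d + 1 + k) {σ : Finset ℕ}
    (hσ : σ ∈ simplices V d) : ∃ e ∈ V.powersetCard k, V \ e = σ := by
  have hσV := (mem_simplices.1 hσ).1
  refine ⟨V \ σ, mem_powersetCard.2 ⟨sdiff_subset, ?_⟩, Finset.sdiff_sdiff_eq_self hσV⟩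
  rwa [← sdiff_mem_simplices_iff hV sdiff_subset, Finset.sdiff_sdiff_eq_self hσV]

theorem filter_cofaces_eq_image_sdiff (hV : #V = d + 1 + k) (hZ : Z ⊆ simplices V d)
    {T : Finset ℕ} (hT : T ∈ V.powersetCard (k + 1)) :
    {σ ∈ Z | V \ T ⊆ σ ∧ #(V \ T) + 1 = #σ} =
      {e ∈ T.powersetCard k | V \ e ∈ Z}.image (V \ ·) := by
  obtain ⟨hTV, hTcard⟩ := mem_powersetCard.1 hT
  ext σ
  simp only [mem_filter, mem_image, mem_powersetCard]
  constructor
  · rintro ⟨hσ, hTσ, -⟩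
    obtain ⟨e, he, rfl⟩ := exists_mem_powersetCard_sdiff_eq hV (hZ hσ)
    obtain ⟨heV, hecard⟩ := mem_powersetCard.1 he
    exact ⟨e, ⟨⟨(sdiff_subset_sdiff_iff_subset hTV heV).1 hTσ, hecard⟩, hσ⟩, rfl⟩
  · rintro ⟨e, ⟨⟨heT, -⟩, hσ⟩, rfl⟩
    have hσcard := (mem_simplices.1 (hZ hσ)).2
    have hTVcard := card_sdiff_of_subset hTV
    exact ⟨hσ, sdiff_subset_sdiff Subset.rfl heT, by omega⟩

theorem sdiff_mem_bd_iff (hV : #V = d + 1 + k) (hZ : Z ⊆ simplices V d)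
    {T : Finset ℕ} (hT : T ∈ V.powersetCard (k + 1)) :
    V \ T ∈ bd Z ↔ Odd #{e ∈ T.powersetCard k | V \ e ∈ Z} := by
  have hTV := (mem_powersetCard.1 hT).1
  rw [mem_bd, filter_cofaces_eq_image_sdiff hV hZ hT, card_image_of_injOn]
  intro e he f hf hef
  have subset_of_mem {g : Finset ℕ} (hg : g ∈ {e ∈ T.powersetCard k | V \ e ∈ Z}) : g ⊆ V :=
    (mem_powersetCard.1 (mem_filter.1 hg).1).1.trans hTV
  exact (sdiff_right_inj (subset_of_mem he) (subset_of_mem hf)).1 hef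

theorem bd_eq_empty_iff_forall_even (hV : #V = d + 1 + k) (hZ : Z ⊆ simplices V d) :
    bd Z = ∅ ↔ ∀ T ∈ V.powersetCard (k + 1), Even #{e ∈ T.powersetCard k | V \ e ∈ Z} := by
  constructor
  · intro hbd T hT
    rw [← Nat.not_odd_iff_even, ← sdiff_mem_bd_iff hV hZ hT, hbd]
    exact notMem_empty _
  · intro heven
    refine eq_empty_of_forall_notMem fun τ hτ ↦ ?_
    obtain ⟨hτV, hτcard⟩ := subset_and_card_eq_of_mem_bd hZ hτ
    have hT : V \ τ ∈ V.powersetCard (k + 1) :=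
      mem_powersetCard.2 ⟨sdiff_subset, by rw [card_sdiff_of_subset hτV]; omega⟩
    rw [← Finset.sdiff_sdiff_eq_self hτV, sdiff_mem_bd_iff hV hZ hT] at hτ
    exact Nat.not_even_iff_odd.2 hτ (heven _ hT)

end Duality

section CodimTwo

variable {V : Finset ℕ} {X Y Z : Finset (Finset ℕ)} {d : ℕ}

theorem powersetCard_two_triple {α : Type*} [DecidableEq α] {x y z : α}
    (hxy : x ≠ y) (hxz : x ≠ z) (hyz : y ≠ z) :
    ({x, y, z} : Finset α).powersetCard 2 = {{x, y}, {x, z}, {y, z}} := by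
  have hyz_pairs : ({y, z} : Finset α).powersetCard 2 = {{y, z}} := by
    rw [← card_pair hyz, powersetCard_self]
  rw [powersetCard_succ_insert (by simp [hxy, hxz]), hyz_pairs, powersetCard_one]
  ext e
  simp only [mem_union, mem_image, mem_map, mem_insert, mem_singleton, Function.Embedding.coeFn_mk]
  aesop

theorem even_card_filter_powersetCard_two_triple {α : Type*} [DecidableEq α]
    (p : Finset α → Prop) [DecidablePred p] {x y z : α} (hxy : x ≠ y) (hxz : x ≠ z) (hyz : y ≠ z) :
    Even #{e ∈ ({x, y, z} : Finset α).powersetCard 2 | p e} ↔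
      (p {x, y} ↔ ¬(p {x, z} ↔ p {y, z})) := by
  have hxy_ne_xz : ({x, y} : Finset α) ≠ {x, z} :=
    ne_of_mem_of_not_mem' (a := y) (by simp) (by simp [hxy.symm, hyz])
  have hxy_ne_yz : ({x, y} : Finset α) ≠ {y, z} :=
    ne_of_mem_of_not_mem' (a := x) (by simp) (by simp [hxy, hxz])
  have hxz_ne_yz : ({x, z} : Finset α) ≠ {y, z} :=
    ne_of_mem_of_not_mem' (a := x) (by simp) (by simp [hxy, hxz])
  rw [powersetCard_two_triple hxy hxz hyz]
  by_cases p {x, y} <;> by_cases p {x, z} <;> by_cases p {y, z} <;>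
    simp [filter_insert, filter_singleton, Nat.even_iff, *]

theorem bd_eq_empty_iff_forall_triple (hV : #V = d + 3) (hZ : Z ⊆ simplices V d) :
    bd Z = ∅ ↔ ∀ x ∈ V, ∀ y ∈ V, ∀ z ∈ V, x ≠ y → x ≠ z → y ≠ z →
      (V \ {x, y} ∈ Z ↔ ¬(V \ {x, z} ∈ Z ↔ V \ {y, z} ∈ Z)) := by
  rw [bd_eq_empty_iff_forall_even (k := 2) (by omega) hZ]
  constructor
  · intro heven x hx y hy z hz hxy hxz hyz
    rw [← even_card_filter_powersetCard_two_triple (V \ · ∈ Z) hxy hxz hyz]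
    exact heven _ (mem_powersetCard.2
      ⟨by simp [insert_subset_iff, hx, hy, hz], card_eq_three.2 ⟨x, y, z, hxy, hxz, hyz, rfl⟩⟩)
  · intro htriple T hT
    obtain ⟨hTV, hTcard⟩ := mem_powersetCard.1 hT
    obtain ⟨x, y, z, hxy, hxz, hyz, rfl⟩ := card_eq_three.1 hTcard
    rw [even_card_filter_powersetCard_two_triple (V \ · ∈ Z) hxy hxz hyz]
    exact htriple x (hTV (by simp)) y (hTV (by simp)) z (hTV (by simp)) hxy hxz hyz

theorem sdiff_pair_eq_sdiff_pair_iff {α : Type*} [DecidableEq α] {V : Finset α} {a b x y : α}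
    (ha : a ∈ V) (hb : b ∈ V) (hx : x ∈ V) (hy : y ∈ V) :
    V \ {a, b} = V \ {x, y} ↔ a = x ∧ b = y ∨ a = y ∧ b = x := by
  rw [sdiff_right_inj (by simp [insert_subset_iff, *]) (by simp [insert_subset_iff, *]), ← coe_inj]
  simp [Set.pair_eq_pair_iff]

theorem exists_sdiff_pair_eq (hV : #V = d + 3) {σ : Finset ℕ} (hσ : σ ∈ simplices V d) :
    ∃ x ∈ V, ∃ y ∈ V, x ≠ y ∧ V \ {x, y} = σ := by
  obtain ⟨e, he, rfl⟩ := exists_mem_powersetCard_sdiff_eq (k := 2) (by omega) hσ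
  obtain ⟨heV, hecard⟩ := mem_powersetCard.1 he
  obtain ⟨x, y, hxy, rfl⟩ := card_eq_two.1 hecard
  exact ⟨x, heV (by simp), y, heV (by simp), hxy, rfl⟩

theorem eq_of_forall_sdiff_pair_mem_iff (hV : #V = d + 3) (hX : X ⊆ simplices V d)
    (hY : Y ⊆ simplices V d)
    (h : ∀ x ∈ V, ∀ y ∈ V, x ≠ y → (V \ {x, y} ∈ X ↔ V \ {x, y} ∈ Y)) : X = Y := by
  ext σ
  by_cases hσ : σ ∈ simplices V d
  · obtain ⟨x, hx, y, hy, hxy, rfl⟩ := exists_sdiff_pair_eq hV hσ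
    exact h x hx y hy hxy
  · exact iff_of_false (fun hσX ↦ hσ (hX hσX)) (fun hσY ↦ hσ (hY hσY))

end CodimTwo

/-- The cut of the complete graph on `V` between `S` and `V \ S`, with each edge encoded as its
complement in `V`, so that the cut becomes a set of codimension-two simplices. -/
def cutCycle (V S : Finset ℕ) : Finset (Finset ℕ) :=
  (S ×ˢ (V \ S)).image fun p ↦ V \ {p.1, p.2}

section CutCycle

variable {V S T : Finset ℕ} {Z : Finset (Finset ℕ)} {d : ℕ}

theorem sdiff_pair_mem_cutCycle (hS : S ⊆ V) {x y : ℕ} (hx : x ∈ V) (hy : y ∈ V) :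
    V \ {x, y} ∈ cutCycle V S ↔ ¬(x ∈ S ↔ y ∈ S) := by
  simp only [cutCycle, mem_image, mem_product, mem_sdiff, Prod.exists]
  constructor
  · rintro ⟨a, b, ⟨ha, hbV, hb⟩, hab⟩
    rcases (sdiff_pair_eq_sdiff_pair_iff (hS ha) hbV hx hy).1 hab with ⟨rfl, rfl⟩ | ⟨rfl, rfl⟩ <;>
      simp [ha, hb]
  · intro hxy
    by_cases hxS : x ∈ S
    · exact ⟨x, y, by grind, rfl⟩
    · exact ⟨y, x, by grind, by rw [pair_comm]⟩

theorem card_cutCycle (hS : S ⊆ V) : #(cutCycle V S) = #S * (#V - #S) := by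
  rw [cutCycle, card_image_of_injOn, card_product, card_sdiff_of_subset hS]
  rintro ⟨a, b⟩ hab ⟨x, y⟩ hxy heq
  simp only [coe_product, Set.mem_prod, mem_coe, mem_sdiff] at hab hxy
  have := (sdiff_pair_eq_sdiff_pair_iff (hS hab.1) hab.2.1 (hS hxy.1) hxy.2.1).1 heq
  grind

theorem cutCycle_subset_simplices (hV : #V = d + 3) (hS : S ⊆ V) :
    cutCycle V S ⊆ simplices V d := by
  intro σ hσ
  obtain ⟨⟨x, y⟩, hxy, rfl⟩ := mem_image.1 hσ
  obtain ⟨hx, hyV, hy⟩ : x ∈ S ∧ y ∈ V ∧ y ∉ S := by simpa using hxy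
  rw [sdiff_mem_simplices_iff (k := 2) (by omega) (by simp [insert_subset_iff, hS hx, hyV])]
  exact card_pair (ne_of_mem_of_not_mem hx hy)

theorem bd_cutCycle (hV : #V = d + 3) (hS : S ⊆ V) : bd (cutCycle V S) = ∅ := by
  rw [bd_eq_empty_iff_forall_triple hV (cutCycle_subset_simplices hV hS)]
  intro x hx y hy z hz _ _ _
  rw [sdiff_pair_mem_cutCycle hS hx hy, sdiff_pair_mem_cutCycle hS hx hz,
    sdiff_pair_mem_cutCycle hS hy hz]
  tauto

theorem exists_eq_cutCycle_of_bd_eq_empty (hV : #V = d + 3) (hZ : Z ⊆ simplices V d)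
    (hbd : bd Z = ∅) : ∃ S ⊆ V, Z = cutCycle V S := by
  rw [bd_eq_empty_iff_forall_triple hV hZ] at hbd
  obtain ⟨v, hv⟩ : V.Nonempty := card_pos.1 (by omega)
  -- A cocycle is determined by its edges at `v`: it is the coboundary of the neighbourhood of `v`.
  let S := {x ∈ V | x ≠ v ∧ V \ {x, v} ∈ Z}
  have hS : S ⊆ V := filter_subset _ _
  refine ⟨S, hS, eq_of_forall_sdiff_pair_mem_iff hV hZ (cutCycle_subset_simplices hV hS)
    fun x hx y hy hxy ↦ ?_⟩
  rw [sdiff_pair_mem_cutCycle hS hx hy]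
  rcases eq_or_ne x v with rfl | hxv
  · simp [S, hy, hxy.symm, pair_comm x y]
  rcases eq_or_ne y v with rfl | hyv
  · simp [S, hx, hxy]
  · simpa [S, hx, hy, hxv, hyv] using hbd x hx y hy v hv hxy hxv hyv

theorem cutCycle_eq_of_subset (hS : S ⊆ V) (hT : T ⊆ V) (hne : (cutCycle V S).Nonempty)
    (hST : cutCycle V S ⊆ cutCycle V T) : cutCycle V S = cutCycle V T := by
  have separates_of_separates {x y : ℕ} (hx : x ∈ V) (hy : y ∈ V) (hxy : ¬(x ∈ S ↔ y ∈ S)) :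
      ¬(x ∈ T ↔ y ∈ T) := by
    rw [← sdiff_pair_mem_cutCycle hT hx hy]
    exact hST ((sdiff_pair_mem_cutCycle hS hx hy).2 hxy)
  obtain ⟨⟨a, b⟩, hab⟩ := image_nonempty.1 hne
  obtain ⟨ha, hbV, hb⟩ : a ∈ S ∧ b ∈ V ∧ b ∉ S := by simpa using hab
  have mem_S_iff {x : ℕ} (hx : x ∈ V) : x ∈ S ↔ (x ∈ T ↔ a ∈ T) := by
    have hab' := separates_of_separates (hS ha) hbV
    have hax := separates_of_separates (hS ha) hx
    have hxb := separates_of_separates hx hbV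
    by_cases hxS : x ∈ S
    · simp only [hxS, hb] at hxb
      tauto
    · simp only [hxS, ha] at hax
      tauto
  refine hST.antisymm fun σ hσ ↦ ?_
  obtain ⟨⟨x, y⟩, hxy, rfl⟩ := mem_image.1 hσ
  obtain ⟨hx, hyV, hy⟩ : x ∈ T ∧ y ∈ V ∧ y ∉ T := by simpa using hxy
  rw [sdiff_pair_mem_cutCycle hS (hT hx) hyV, mem_S_iff (hT hx), mem_S_iff hyV]
  tauto

theorem isSimpleCycle_iff_exists_cutCycle (hV : #V = d + 3) (hZ : Z ⊆ simplices V d) :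
    IsSimpleCycle Z ↔ ∃ S ⊆ V, (cutCycle V S).Nonempty ∧ Z = cutCycle V S := by
  constructor
  · rintro ⟨hne, hbd, -⟩
    obtain ⟨S, hS, rfl⟩ := exists_eq_cutCycle_of_bd_eq_empty hV hZ hbd
    exact ⟨S, hS, nonempty_iff_ne_empty.2 hne, rfl⟩
  · rintro ⟨S, hS, hne, rfl⟩
    refine ⟨hne.ne_empty, bd_cutCycle hV hS, fun Y hY hYne hYbd ↦ ?_⟩
    obtain ⟨T, hT, rfl⟩ := exists_eq_cutCycle_of_bd_eq_empty hV (hY.1.trans hZ) hYbd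
    exact hY.ne (cutCycle_eq_of_subset hT hS (nonempty_iff_ne_empty.2 hYne) hY.1)

end CutCycle

theorem half_mul_sub_half (n : ℕ) : n / 2 * (n - n / 2) = n ^ 2 / 4 := by
  obtain ⟨m, rfl | rfl⟩ := n.even_or_odd'
  · rw [show 2 * m / 2 = m by omega, show 2 * m - m = m by omega]
    grind
  · rw [show (2 * m + 1) / 2 = m by omega, show 2 * m + 1 - m = m + 1 by omega]
    grind

theorem mul_le_add_sq_div_four (a b : ℕ) : a * b ≤ (a + b) ^ 2 / 4 := by
  have := four_mul_le_sq_add a b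
  grind

theorem max_simple_codim_two_cycle_general {V : Finset ℕ} {d : ℕ} (hV : #V = d + 3) :
    IsGreatest {k : ℕ | ∃ Z, Z ⊆ simplices V d ∧ IsSimpleCycle Z ∧ #Z = k} (#V ^ 2 / 4) := by
  constructor
  · obtain ⟨S, hS, hScard⟩ := exists_subset_card_eq (Nat.div_le_self #V 2)
    have hZ := cutCycle_subset_simplices hV hS
    have hcard : #(cutCycle V S) = #V ^ 2 / 4 := by
      rw [card_cutCycle hS, hScard, half_mul_sub_half]
    have hne : (cutCycle V S).Nonempty := by
      rw [← card_pos, card_cutCycle hS, hScard]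
      exact Nat.mul_pos (by omega) (by omega)
    exact ⟨_, hZ, (isSimpleCycle_iff_exists_cutCycle hV hZ).2 ⟨S, hS, hne, rfl⟩, hcard⟩
  · rintro _ ⟨Z, hZ, hsimple, rfl⟩
    obtain ⟨S, hS, -, rfl⟩ := (isSimpleCycle_iff_exists_cutCycle hV hZ).1 hsimple
    calc #(cutCycle V S) = #S * (#V - #S) := card_cutCycle hS
      _ ≤ (#S + (#V - #S)) ^ 2 / 4 := mul_le_add_sq_div_four _ _
      _ = #V ^ 2 / 4 := by rw [Nat.add_sub_cancel' (card_le_card hS)]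

/-- For `n ≥ 4`, the maximum size of a simple `(n-3)`-cycle on `[n]` over `F_2` is
`⌊n²/4⌋`. -/
theorem max_simple_codim_two_cycle (n : ℕ) (hn : 4 ≤ n) :
    IsGreatest {k : ℕ | ∃ Z, Z ⊆ simplices (rng n) (n - 3) ∧ IsSimpleCycle Z ∧
      Z.card = k} (n ^ 2 / 4) := by
  have hcard : #(rng n) = n := by simp [rng]
  simpa only [hcard] using max_simple_codim_two_cycle_general (V := rng n) (d := n - 3) (by omega)
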